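/- Let G = (V,E) be a finite connected undirected unweighted graph with m edges, let R = max_{(i,j)∈V²} R_{ij} be the maximal effective resistance between two vertices of G, and let C denote the maximum over starting vertices of the cover time of the simple random walk on G. Then C ≥ m·R. -/

import Mathlib

open Finset

variable {V : Type*}

/-- The total weight incident to a vertex: `ω(i) = Σ_l ω(i,l)`. -/
noncomputable def vWeight [Fintype V] (w : V → V → ℝ) (i : V) : ℝ :=
  ∑ l, w i l

/-- The total weight of the graph (each edge counted once): `ω(G)`. -/
noncomputable def gWeight [Fintype V] (w : V → V → ℝ) : ℝ :=
  (∑ i, ∑ l, w i l) / 2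

/-- Transition probabilities of the random walk on the weighted graph:
from `i`, move to `l` with probability `ω(i,l)/ω(i)`. -/
noncomputable def walkStep [Fintype V] (w : V → V → ℝ) (i l : V) : ℝ :=
  w i l / vWeight w i

/-- `w` is a system of positive symmetric edge weights on a finite connected undirected
graph: symmetric, nonnegative, zero on the diagonal (and on non-edges), and the graph
whose edges are the pairs with positive weight is connected. -/
def IsWeight [Fintype V] (w : V → V → ℝ) : Prop :=
  (∀ a b, w a b = w b a) ∧ (∀ a b, 0 ≤ w a b) ∧ (∀ a, w a a = 0) ∧
    (∀ a b, Relation.ReflTransGen (fun x y => 0 < w x y) a b)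

/-- `hitSurv p j n i` is the probability that the Markov chain with transition kernel `p`
started at `i` has not visited `j` at any of the times `0, 1, …, n`. -/
noncomputable def hitSurv {S : Type*} [Fintype S] [DecidableEq S] (p : S → S → ℝ) (j : S) :
    ℕ → S → ℝ
  | 0 => fun i => if i = j then 0 else 1
  | n + 1 => fun i => if i = j then 0 else ∑ l, p i l * hitSurv p j n l

/-- Expected hitting time of `j` from `i`: the expected number of steps for the chain
started at `i` to first reach `j`, computed as `Σ_n P(T_j > n)`. -/
noncomputable def hitTime {S : Type*} [Fintype S] [DecidableEq S] (p : S → S → ℝ)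
    (i j : S) : ℝ :=
  ∑' n : ℕ, hitSurv p j n i

/-- A unit-current potential from `i` to `j`: Kirchhoff's equations when a unit current
enters at `i` and leaves at `j`. -/
def IsUnitPotential [Fintype V] (w : V → V → ℝ) (i j : V) (φ : V → ℝ) : Prop :=
  (∀ k, k ≠ i → k ≠ j → ∑ l, w k l * (φ k - φ l) = 0) ∧
    (∑ l, w i l * (φ i - φ l) = 1) ∧
    (∑ l, w j l * (φ j - φ l) = -1)

/-- `R` is the effective-resistance matrix of the weighted graph `w`:
`R a a = 0`, and for `a ≠ b`, `R a b = V_a - V_b` for a unit-current potential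
from `a` to `b`. -/
def IsResistance [Fintype V] (w : V → V → ℝ) (R : V → V → ℝ) : Prop :=
  (∀ a, R a a = 0) ∧
    ∀ a b, a ≠ b → ∃ φ, IsUnitPotential w a b φ ∧ R a b = φ a - φ b

/-- The weight function of an unweighted graph: weight `1` on edges, `0` elsewhere. -/
noncomputable def aw (G : SimpleGraph V) [DecidableRel G.Adj] (a b : V) : ℝ :=
  if G.Adj a b then 1 else 0

/-- Probability of a given trajectory: `trajProb p i xs` is the probability that the
chain started at `i` successively visits the vertices of the list `xs`. -/
noncomputable def trajProb {S : Type*} [Fintype S] (p : S → S → ℝ) : S → List S → ℝ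
  | _, [] => 1
  | i, x :: xs => p i x * trajProb p x xs

/-- Probability that the walk started at `i` has not visited every vertex by time `n`. -/
noncomputable def notCoveredProb [Fintype V] [DecidableEq V] (p : V → V → ℝ) (n : ℕ)
    (i : V) : ℝ :=
  ∑ xs : Fin n → V, trajProb p i (List.ofFn xs) *
    (if (i :: List.ofFn xs).toFinset = Finset.univ then 0 else 1)

/-- The cover time from `i`: the expected number of steps for the walk started at `i`
to have visited every vertex, computed as `Σ_n P(T_cov > n)`. -/
noncomputable def coverTime [Fintype V] [DecidableEq V] (p : V → V → ℝ) (i : V) : ℝ :=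
  ∑' n : ℕ, notCoveredProb p n i

/-- `visitSurv p j k n i` is the probability that the chain started at `i` is at `k` at
time `n` without having visited `j` at any of the times `0, …, n`. -/
noncomputable def visitSurv [Fintype V] [DecidableEq V] (p : V → V → ℝ) (j k : V) :
    ℕ → V → ℝ
  | 0 => fun i => if i = j then 0 else if i = k then 1 else 0
  | n + 1 => fun i => if i = j then 0 else ∑ l, p i l * visitSurv p j k n l

/-- `expVisits p i j k` is the expected number of visits to `k` (counting time `0`) of
the chain started at `i` strictly before its first visit to `j`. -/
noncomputable def expVisits [Fintype V] [DecidableEq V] (p : V → V → ℝ) (i j k : V) : ℝ :=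
  ∑' n : ℕ, visitSurv p j k n i

/-- `reachBeforeAux p i j n l` is the probability that the walk started at `l` reaches `j`
within `n` steps without visiting `i` first. -/
noncomputable def reachBeforeAux [Fintype V] [DecidableEq V] (p : V → V → ℝ) (i j : V) :
    ℕ → V → ℝ
  | 0 => fun l => if l = j then 1 else 0
  | n + 1 => fun l =>
      if l = j then 1 else if l = i then 0 else ∑ m, p l m * reachBeforeAux p i j n m

/-- The probability that the walk started at `i` reaches `j` before returning to `i`:
one step from `i` to `l`, then reach `j` before `i` (monotone limit in `n`). -/
noncomputable def escapeProb [Fintype V] [DecidableEq V] (p : V → V → ℝ) (i j : V) : ℝ :=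
  ∑ l, p i l * ⨆ n, reachBeforeAux p i j n l

/-- `hitSurvSet p F n x` is the probability that the chain started at `x` has not visited
the set `F` at any of the times `0, …, n`. -/
noncomputable def hitSurvSet {S : Type*} [Fintype S] (p : S → S → ℝ) (F : S → Prop)
    [DecidablePred F] : ℕ → S → ℝ
  | 0 => fun x => if F x then 0 else 1
  | n + 1 => fun x => if F x then 0 else ∑ y, p x y * hitSurvSet p F n y

/-- Expected hitting time of the set `F` from `x`, computed as `Σ_n P(T_F > n)`. -/
noncomputable def hitTimeSet {S : Type*} [Fintype S] (p : S → S → ℝ) (F : S → Prop)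
    [DecidablePred F] (x : S) : ℝ :=
  ∑' n : ℕ, hitSurvSet p F n x

/-- The associated chain `𝒢` on pairs `(P, i)` (visited set, current vertex): from
`(P, i)` it moves to `(P ∪ {j}, j)` with probability `ω(i,j)/ω(i)`. -/
noncomputable def pairStep [Fintype V] [DecidableEq V] (w : V → V → ℝ)
    (s t : Finset V × V) : ℝ :=
  if t.1 = insert t.2 s.1 then walkStep w s.2 t.2 else 0

/-- `exitProbAux p P j n i` is the probability that the walk started at `i` leaves `P`
within `n` steps and that the first vertex visited outside `P` is `j`. -/
noncomputable def exitProbAux [Fintype V] [DecidableEq V] (p : V → V → ℝ) (P : Finset V)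
    (j : V) : ℕ → V → ℝ
  | 0 => fun i => if i ∈ P then 0 else if i = j then 1 else 0
  | n + 1 => fun i =>
      if i ∈ P then ∑ l, p i l * exitProbAux p P j n l else if i = j then 1 else 0

/-- The probability that the first vertex outside `P` visited by the walk started at `i`
is `j` (monotone limit in the number of allowed steps). -/
noncomputable def exitProb [Fintype V] [DecidableEq V] (p : V → V → ℝ) (P : Finset V)
    (i j : V) : ℝ :=
  ⨆ n, exitProbAux p P j n i

/-- The negated weighted Laplacian `Δ` of the weighted graph `w` on `Fin n`. -/
noncomputable def negLaplacian (n : ℕ) (w : Fin n → Fin n → ℝ) :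
    Matrix (Fin n) (Fin n) ℝ :=
  Matrix.of fun k l => if k = l then -(∑ m, w k m) else w k l

/-- `Δ₂`: the negated weighted Laplacian with its first row replaced by the first row of
the identity matrix. -/
noncomputable def delta2 (n : ℕ) (hn : 0 < n) (w : Fin n → Fin n → ℝ) :
    Matrix (Fin n) (Fin n) ℝ :=
  (negLaplacian n w).updateRow ⟨0, hn⟩ (fun l => if l = ⟨0, hn⟩ then 1 else 0)

/-- The weight function obtained from `w` by adding weight `u` on the edge `{a, b}`. -/
noncomputable def addEdge [DecidableEq V] (w : V → V → ℝ) (a b : V) (u : ℝ)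
    (x y : V) : ℝ :=
  w x y + (if (x = a ∧ y = b) ∨ (x = b ∧ y = a) then u else 0)

/-!
The cover time from `i` dominates the hitting time of every vertex from `i`, so the claim follows
from the commute time identity `h(a, b) + h(b, a) = 2 m R a b`: one of the two hitting times is at
least `m R a b`. For the identity, let `L` be the Laplacian. First-step analysis away from `j`,
together with the vanishing of the total sum of `L h(·, j)`, gives `L h(·, j) = deg - 2 m δ_j`.
Pairing this with a unit potential `φ` (`L φ = δ_a - δ_b`) and moving `L` across yields
`h(a, j) - h(b, j) = ⟨φ, deg⟩ - 2 m φ j`; subtract the cases `j = a` and `j = b`.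
-/

open Matrix

section Trajectories

lemma trajProb_nonneg [Fintype V] {p : V → V → ℝ} (hp : ∀ i l, 0 ≤ p i l) (i : V) (xs : List V) :
    0 ≤ trajProb p i xs := by
  induction xs generalizing i with
  | nil => exact zero_le_one
  | cons x xs ih => exact mul_nonneg (hp i x) (ih x)

variable [Fintype V] [DecidableEq V] {p : V → V → ℝ}

lemma hitSurv_nonneg (hp : ∀ i l, 0 ≤ p i l) (j : V) (n : ℕ) (i : V) : 0 ≤ hitSurv p j n i := by
  induction n generalizing i with
  | zero => simp only [hitSurv]; positivity
  | succ n ih =>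
    simp only [hitSurv]
    split_ifs
    · exact le_rfl
    · exact sum_nonneg fun l _ => mul_nonneg (hp i l) (ih l)

lemma hitSurv_self (p : V → V → ℝ) (j : V) (n : ℕ) : hitSurv p j n j = 0 := by
  cases n <;> simp [hitSurv]

lemma hitTime_self (p : V → V → ℝ) (j : V) : hitTime p j j = 0 := by
  simp [hitTime, hitSurv_self]

lemma hitSurv_zero_of_ne (p : V → V → ℝ) {i j : V} (hij : i ≠ j) : hitSurv p j 0 i = 1 :=
  if_neg hij

lemma hitSurv_succ_of_ne (p : V → V → ℝ) {i j : V} (hij : i ≠ j) (n : ℕ) :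
    hitSurv p j (n + 1) i = p i ⬝ᵥ hitSurv p j n :=
  if_neg hij

lemma hitSurv_eq_sum_trajProb (p : V → V → ℝ) (j : V) (n : ℕ) (i : V) :
    hitSurv p j n i = ∑ xs : Fin n → V, trajProb p i (List.ofFn xs) *
      (if j ∈ i :: List.ofFn xs then 0 else 1) := by
  induction n generalizing i with
  | zero => simp [hitSurv, trajProb, eq_comm]
  | succ n ih =>
    rw [← (Fin.consEquiv fun _ : Fin (n + 1) => V).sum_comp, Fintype.sum_prod_type]
    by_cases hij : i = j
    · simp [hitSurv, hij]
    · simp [hitSurv_succ_of_ne p hij, dotProduct, ih, mul_sum, Fin.consEquiv,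
        List.ofFn_succ, trajProb, Ne.symm hij]

lemma notCoveredProb_nonneg (hp : ∀ i l, 0 ≤ p i l) (n : ℕ) (i : V) : 0 ≤ notCoveredProb p n i :=
  sum_nonneg fun _ _ => mul_nonneg (trajProb_nonneg hp _ _) (by positivity)

lemma hitSurv_le_notCoveredProb (hp : ∀ i l, 0 ≤ p i l) (j : V) (n : ℕ) (i : V) :
    hitSurv p j n i ≤ notCoveredProb p n i := by
  rw [hitSurv_eq_sum_trajProb, notCoveredProb]
  refine sum_le_sum fun xs _ => mul_le_mul_of_nonneg_left ?_ (trajProb_nonneg hp _ _)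
  have hmem : (i :: List.ofFn xs).toFinset = univ → j ∈ i :: List.ofFn xs := fun h =>
    List.mem_toFinset.1 (h ▸ mem_univ j)
  split_ifs <;> simp_all

lemma notCoveredProb_le_sum_hitSurv (hp : ∀ i l, 0 ≤ p i l) (n : ℕ) (i : V) :
    notCoveredProb p n i ≤ ∑ j, hitSurv p j n i := by
  simp only [hitSurv_eq_sum_trajProb]
  rw [notCoveredProb, sum_comm]
  refine sum_le_sum fun xs _ => ?_
  rw [← mul_sum]
  refine mul_le_mul_of_nonneg_left ?_ (trajProb_nonneg hp _ _)
  have hnn : ∀ j ∈ univ, (0 : ℝ) ≤ if j ∈ i :: List.ofFn xs then 0 else 1 :=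
    fun j _ => by positivity
  split_ifs with hcover
  · exact sum_nonneg hnn
  · obtain ⟨j, hj⟩ : ∃ j, j ∉ i :: List.ofFn xs := by
      simpa [eq_univ_iff_forall] using hcover
    simpa only [if_neg hj] using single_le_sum hnn (mem_univ j)

lemma coverTime_nonneg (hp : ∀ i l, 0 ≤ p i l) (i : V) : 0 ≤ coverTime p i :=
  tsum_nonneg fun n => notCoveredProb_nonneg hp n i

lemma hitTime_le_coverTime (hp : ∀ i l, 0 ≤ p i l) {i : V}
    (hsum : ∀ j, Summable fun n => hitSurv p j n i) (j : V) : hitTime p i j ≤ coverTime p i := by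
  have hcover : Summable fun n => notCoveredProb p n i :=
    .of_nonneg_of_le (notCoveredProb_nonneg hp · i) (notCoveredProb_le_sum_hitSurv hp · i)
      (summable_sum fun j _ => hsum j)
  exact (hsum j).tsum_le_tsum (hitSurv_le_notCoveredProb hp j · i) hcover

end Trajectories

section Weights

variable [Fintype V] {w : V → V → ℝ}

lemma vWeight_nonneg (hw : ∀ a b, 0 ≤ w a b) (i : V) : 0 ≤ vWeight w i :=
  sum_nonneg fun l _ => hw i l

lemma sum_vWeight (w : V → V → ℝ) : ∑ i, vWeight w i = 2 * gWeight w :=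
  (mul_div_cancel₀ _ two_ne_zero).symm

lemma gWeight_nonneg (hw : ∀ a b, 0 ≤ w a b) : 0 ≤ gWeight w :=
  div_nonneg (sum_nonneg fun i _ => vWeight_nonneg hw i) zero_le_two

lemma walkStep_nonneg (hw : ∀ a b, 0 ≤ w a b) (i l : V) : 0 ≤ walkStep w i l :=
  div_nonneg (hw i l) (vWeight_nonneg hw i)

lemma vWeight_mul_walkStep (hw : ∀ a b, 0 ≤ w a b) (i l : V) :
    vWeight w i * walkStep w i l = w i l := by
  refine mul_div_cancel_of_imp' fun hi => ?_
  exact (sum_eq_zero_iff_of_nonneg fun m _ => hw i m).1 hi l (mem_univ l)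

lemma IsUnitPotential.ne {a b : V} {φ : V → ℝ} (hφ : IsUnitPotential w a b φ) : a ≠ b := by
  rintro rfl
  linarith [hφ.2.1, hφ.2.2]

variable [DecidableEq V]

/-- The Laplacian matrix of the weights `w`, with positive diagonal; a loop `w i i` cancels out. -/
noncomputable def weightedLaplacian (w : V → V → ℝ) : Matrix V V ℝ :=
  diagonal (vWeight w) - of w

lemma weightedLaplacian_mulVec (w : V → V → ℝ) (f : V → ℝ) (k : V) :
    (weightedLaplacian w *ᵥ f) k = vWeight w k * f k - w k ⬝ᵥ f := by
  rw [weightedLaplacian, sub_mulVec, Pi.sub_apply, mulVec_diagonal]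
  rfl

lemma weightedLaplacian_mulVec_eq_sum (w : V → V → ℝ) (f : V → ℝ) (k : V) :
    (weightedLaplacian w *ᵥ f) k = ∑ l, w k l * (f k - f l) := by
  simp only [weightedLaplacian_mulVec, vWeight, dotProduct, mul_sub, sum_sub_distrib, sum_mul]

lemma dotProduct_weightedLaplacian_mulVec (hsymm : ∀ a b, w a b = w b a) (f g : V → ℝ) :
    f ⬝ᵥ weightedLaplacian w *ᵥ g = weightedLaplacian w *ᵥ f ⬝ᵥ g := by
  have hL : (weightedLaplacian w).IsSymm :=
    (isSymm_diagonal _).sub (IsSymm.ext fun a b => hsymm b a)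
  rw [dotProduct_mulVec, ← mulVec_transpose, hL.eq]

lemma sum_weightedLaplacian_mulVec (hsymm : ∀ a b, w a b = w b a) (f : V → ℝ) :
    ∑ k, (weightedLaplacian w *ᵥ f) k = 0 := by
  have hone : weightedLaplacian w *ᵥ 1 = 0 := by
    ext k
    simp [weightedLaplacian_mulVec_eq_sum]
  rw [← one_dotProduct, dotProduct_weightedLaplacian_mulVec hsymm, hone, zero_dotProduct]

lemma IsUnitPotential.weightedLaplacian_mulVec {a b : V} {φ : V → ℝ}
    (hφ : IsUnitPotential w a b φ) :
    weightedLaplacian w *ᵥ φ = Pi.single a 1 - Pi.single b 1 := by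
  ext k
  rw [weightedLaplacian_mulVec_eq_sum]
  rcases eq_or_ne k a with rfl | hka
  · simp [hφ.2.1, hφ.ne]
  rcases eq_or_ne k b with rfl | hkb
  · simp [hφ.2.2, hka]
  · simp [hφ.1 k hka hkb, hka, hkb]

lemma vWeight_mul_hitSurv_succ (hw : ∀ a b, 0 ≤ w a b) {i j : V} (hij : i ≠ j) (n : ℕ) :
    vWeight w i * hitSurv (walkStep w) j (n + 1) i = w i ⬝ᵥ hitSurv (walkStep w) j n := by
  simp only [hitSurv_succ_of_ne _ hij, dotProduct, mul_sum, ← mul_assoc, vWeight_mul_walkStep hw]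

-- By reversibility, the left-hand side is the mass of the walk started from the invariant measure
-- `vWeight w` that first visits `j` at time `n + 1`.
lemma dotProduct_hitSurv_eq_sub (hsymm : ∀ a b, w a b = w b a) (hw : ∀ a b, 0 ≤ w a b)
    (j : V) (n : ℕ) :
    w j ⬝ᵥ hitSurv (walkStep w) j n =
      vWeight w ⬝ᵥ hitSurv (walkStep w) j n - vWeight w ⬝ᵥ hitSurv (walkStep w) j (n + 1) := by
  set u := hitSurv (walkStep w) j with hu
  have hinvariant : vWeight w ⬝ᵥ u n = ∑ i, w i ⬝ᵥ u n := by
    have hL := sum_weightedLaplacian_mulVec hsymm (u n)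
    simp only [weightedLaplacian_mulVec, sum_sub_distrib] at hL
    exact sub_eq_zero.1 hL
  have hsingle : ∑ i, (w i ⬝ᵥ u n - vWeight w i * u (n + 1) i) = w j ⬝ᵥ u n := by
    rw [Fintype.sum_eq_single j fun i hij => by rw [vWeight_mul_hitSurv_succ hw hij, sub_self],
      hu, hitSurv_self, mul_zero, sub_zero]
  rw [← hsingle, sum_sub_distrib, ← hinvariant, dotProduct, dotProduct]

lemma summable_dotProduct_hitSurv (hsymm : ∀ a b, w a b = w b a) (hw : ∀ a b, 0 ≤ w a b) (j : V) :
    Summable fun n => w j ⬝ᵥ hitSurv (walkStep w) j n := by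
  have hu := hitSurv_nonneg (walkStep_nonneg hw) j
  refine summable_of_sum_range_le (c := vWeight w ⬝ᵥ hitSurv (walkStep w) j 0)
    (fun n => dotProduct_nonneg_of_nonneg (hw j) (hu n)) fun N => ?_
  simp only [dotProduct_hitSurv_eq_sub hsymm hw]
  rw [sum_range_sub' fun n => vWeight w ⬝ᵥ hitSurv (walkStep w) j n]
  exact sub_le_self _ (dotProduct_nonneg_of_nonneg (vWeight_nonneg hw) (hu N))

/-- `w` is the conductance function of a connected electrical network, the setting of the commute
time identity. Unlike in `IsWeight`, loops are allowed, so that lazy random walks are covered; a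
loop enters `gWeight w` with half its weight. -/
structure IsNetwork (w : V → V → ℝ) : Prop where
  symm : ∀ a b, w a b = w b a
  nonneg : ∀ a b, 0 ≤ w a b
  connected : ∀ a b, Relation.ReflTransGen (fun x y => 0 < w x y) a b

namespace IsNetwork

-- Summability spreads from `j` along edges `x → y` of positive weight, as `w x y * u n y` is at
-- most `w x ⬝ᵥ u n`, where `u = hitSurv (walkStep w) j`.
lemma summable_hitSurv (hw : IsNetwork w) (i j : V) :
    Summable fun n => hitSurv (walkStep w) j n i := by
  have hu := hitSurv_nonneg (walkStep_nonneg hw.nonneg) j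
  induction hw.connected j i with
  | refl => simpa only [hitSurv_self] using summable_zero
  | @tail x y _ hxy ih =>
    have hneighbors : Summable fun n => w x ⬝ᵥ hitSurv (walkStep w) j n := by
      rcases eq_or_ne x j with rfl | hxj
      · exact summable_dotProduct_hitSurv hw.symm hw.nonneg x
      · simp only [← vWeight_mul_hitSurv_succ hw.nonneg hxj]
        exact ((summable_nat_add_iff 1).2 ih).mul_left _
    rw [← summable_mul_left_iff hxy.ne']
    refine .of_nonneg_of_le (fun n => mul_nonneg hxy.le (hu n y)) (fun n => ?_) hneighbors
    exact single_le_sum (f := fun l => w x l * hitSurv (walkStep w) j n l)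
      (fun l _ => mul_nonneg (hw.nonneg x l) (hu n l)) (mem_univ y)

lemma vWeight_mul_hitTime (hw : IsNetwork w) {i j : V} (hij : i ≠ j) :
    vWeight w i * hitTime (walkStep w) i j =
      vWeight w i + w i ⬝ᵥ fun l => hitTime (walkStep w) l j := by
  have htail : ∑' n, w i ⬝ᵥ hitSurv (walkStep w) j n =
      w i ⬝ᵥ fun l => hitTime (walkStep w) l j := by
    simp only [dotProduct, hitTime, ← tsum_mul_left]
    exact Summable.tsum_finsetSum fun l _ => (hw.summable_hitSurv l j).mul_left _
  rw [hitTime, (hw.summable_hitSurv i j).tsum_eq_zero_add, hitSurv_zero_of_ne _ hij, mul_add,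
    mul_one, ← tsum_mul_left]
  simp only [vWeight_mul_hitSurv_succ hw.nonneg hij, htail]

lemma weightedLaplacian_mulVec_hitTime (hw : IsNetwork w) (j : V) :
    (weightedLaplacian w *ᵥ fun l => hitTime (walkStep w) l j) =
      vWeight w - Pi.single j (2 * gWeight w) := by
  set h := fun l => hitTime (walkStep w) l j
  have hne : ∀ k, k ≠ j → (weightedLaplacian w *ᵥ h) k = vWeight w k := fun k hk => by
    rw [weightedLaplacian_mulVec, hw.vWeight_mul_hitTime hk, add_sub_cancel_right]
  have hself : vWeight w j - (weightedLaplacian w *ᵥ h) j = 2 * gWeight w := by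
    rw [← Fintype.sum_eq_single (f := fun k => vWeight w k - (weightedLaplacian w *ᵥ h) k) j
        fun k hk => by rw [hne k hk, sub_self],
      sum_sub_distrib, sum_vWeight, sum_weightedLaplacian_mulVec hw.symm, sub_zero]
  ext k
  rcases eq_or_ne k j with rfl | hk
  · simp [← hself]
  · simp [hne k hk, hk]

lemma hitTime_sub_hitTime (hw : IsNetwork w) {a b : V} {φ : V → ℝ}
    (hφ : IsUnitPotential w a b φ) (j : V) :
    hitTime (walkStep w) a j - hitTime (walkStep w) b j =
      φ ⬝ᵥ vWeight w - φ j * (2 * gWeight w) := by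
  calc hitTime (walkStep w) a j - hitTime (walkStep w) b j
      = weightedLaplacian w *ᵥ φ ⬝ᵥ fun l => hitTime (walkStep w) l j := by
        rw [hφ.weightedLaplacian_mulVec, sub_dotProduct, single_one_dotProduct,
          single_one_dotProduct]
    _ = φ ⬝ᵥ weightedLaplacian w *ᵥ fun l => hitTime (walkStep w) l j :=
        (dotProduct_weightedLaplacian_mulVec hw.symm _ _).symm
    _ = φ ⬝ᵥ vWeight w - φ j * (2 * gWeight w) := by
        rw [hw.weightedLaplacian_mulVec_hitTime, dotProduct_sub, dotProduct_single]

lemma hitTime_add_hitTime (hw : IsNetwork w) {a b : V} {φ : V → ℝ}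
    (hφ : IsUnitPotential w a b φ) :
    hitTime (walkStep w) a b + hitTime (walkStep w) b a = 2 * gWeight w * (φ a - φ b) := by
  have ha := hw.hitTime_sub_hitTime hφ a
  have hb := hw.hitTime_sub_hitTime hφ b
  rw [hitTime_self] at ha hb
  linarith

lemma hitTime_le_iSup_coverTime (hw : IsNetwork w) (i j : V) :
    hitTime (walkStep w) i j ≤ ⨆ i, coverTime (walkStep w) i :=
  (hitTime_le_coverTime (walkStep_nonneg hw.nonneg) (hw.summable_hitSurv i) j).trans
    (le_ciSup (Set.finite_range _).bddAbove i)

lemma gWeight_mul_resistance_le (hw : IsNetwork w) {R : V → V → ℝ} (hR : IsResistance w R)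
    (a b : V) : gWeight w * R a b ≤ ⨆ i, coverTime (walkStep w) i := by
  rcases eq_or_ne a b with rfl | hab
  · rw [hR.1, mul_zero]
    exact Real.iSup_nonneg (coverTime_nonneg (walkStep_nonneg hw.nonneg))
  · obtain ⟨φ, hφ, hRφ⟩ := hR.2 a b hab
    rw [hRφ]
    linarith [hw.hitTime_add_hitTime hφ, hw.hitTime_le_iSup_coverTime a b,
      hw.hitTime_le_iSup_coverTime b a]

end IsNetwork

end Weights

section UnitWeights

variable (G : SimpleGraph V) [DecidableRel G.Adj]

lemma isNetwork_aw (hG : G.Connected) : IsNetwork (aw G) where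
  symm a b := by simp only [aw, G.adj_comm]
  nonneg a b := by rw [aw]; positivity
  connected a b := by
    have hab := (SimpleGraph.reachable_iff_reflTransGen a b).1 (hG.preconnected a b)
    exact Relation.ReflTransGen.mono (fun x y hxy => by simp [aw, hxy]) _ _ hab

variable [Fintype V]

lemma vWeight_aw (i : V) : vWeight (aw G) i = G.degree i :=
  (G.degree_eq_sum_if_adj i).symm

lemma gWeight_aw : gWeight (aw G) = G.edgeFinset.card := by
  have htwice : 2 * gWeight (aw G) = 2 * G.edgeFinset.card := by
    simp only [← sum_vWeight, vWeight_aw]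
    exact_mod_cast G.sum_degrees_eq_twice_card_edges
  exact mul_left_cancel₀ two_ne_zero htwice

end UnitWeights

theorem cover_time_lower_bound_general [Fintype V] [DecidableEq V] [Nonempty V] {w : V → V → ℝ}
    (hw : IsNetwork w) {R : V → V → ℝ} (hR : IsResistance w R) :
    gWeight w * (⨆ a, ⨆ b, R a b) ≤ ⨆ i, coverTime (walkStep w) i := by
  simp only [Real.mul_iSup_of_nonneg (gWeight_nonneg hw.nonneg)]
  exact ciSup_le fun a => ciSup_le fun b => hw.gWeight_mul_resistance_le hR a b

/-- The cover time of a connected unweighted graph is at least `m·R`,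
where `R` is the maximal effective resistance. -/
theorem cover_time_lower_bound
    {V : Type*} [Fintype V] [DecidableEq V] (G : SimpleGraph V) [DecidableRel G.Adj]
    (hG : G.Connected) (R : V → V → ℝ) (hR : IsResistance (aw G) R) :
    (G.edgeFinset.card : ℝ) * (⨆ a, ⨆ b, R a b) ≤
      ⨆ i, coverTime (walkStep (aw G)) i := by
  have := hG.nonempty
  rw [← gWeight_aw]
  exact cover_time_lower_bound_general (isNetwork_aw G hG) hR
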